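/- There exists an infinite sequence U₁, U₂, … of closed β-normal λ-terms which has no generator: no closed λ-term A satisfies (A I) ≃β U₁ and (A <U₁,…,Uₙ>) ≃β U_{n+1} for all n ≥ 1. -/

import Mathlib

/-- Untyped λ-terms in de Bruijn notation. -/
inductive Lam : Type
  | var : ℕ → Lam
  | app : Lam → Lam → Lam
  | lam : Lam → Lam
  deriving DecidableEq

namespace Lam

/-- Shift by one the free variables with index ≥ `d`. -/
def lift (d : ℕ) : Lam → Lam
  | var n => if n < d then var n else var (n + 1)
  | app M N => app (lift d M) (lift d N)
  | lam M => lam (lift (d + 1) M)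

/-- Capture-avoiding substitution of `N` for the free variable of index `n`. -/
def subst : Lam → ℕ → Lam → Lam
  | var m, n, N => if m = n then N else if n < m then var (m - 1) else var m
  | app M₁ M₂, n, N => app (subst M₁ n N) (subst M₂ n N)
  | lam M, n, N => lam (subst M (n + 1) (lift 0 N))

/-- One-step β-reduction (contraction of a β-redex anywhere in the term). -/
inductive Step : Lam → Lam → Prop
  | beta (M N : Lam) : Step (app (lam M) N) (subst M 0 N)
  | appL {M M' : Lam} (N : Lam) : Step M M' → Step (app M N) (app M' N)
  | appR (M : Lam) {N N' : Lam} : Step N N' → Step (app M N) (app M N')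
  | lam {M M' : Lam} : Step M M' → Step (Lam.lam M) (Lam.lam M')

/-- β-equivalence: the equivalence relation generated by one-step β-reduction. -/
def BetaEq : Lam → Lam → Prop := Relation.EqvGen Step

/-- The variable of index `n` occurs free in the term. -/
def HasFree : Lam → ℕ → Prop
  | var m, n => m = n
  | app M N, n => HasFree M n ∨ HasFree N n
  | lam M, n => HasFree M (n + 1)

/-- A term is closed if it has no free variables. -/
def Closed (M : Lam) : Prop := ∀ n, ¬ HasFree M n

/-- A term is β-normal: it contains no β-redex. -/
def IsBetaNormal : Lam → Prop
  | app (lam _) _ => False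
  | app M N => IsBetaNormal M ∧ IsBetaNormal N
  | lam M => IsBetaNormal M
  | var _ => True

/-- A term is βη-normal: it contains no β-redex and no η-redex
`λx.(M x)` with `x` not free in `M`. -/
def IsBetaEtaNormal : Lam → Prop
  | app (lam _) _ => False
  | app M N => IsBetaEtaNormal M ∧ IsBetaEtaNormal N
  | lam (app M (var 0)) => HasFree M 0 ∧ IsBetaEtaNormal (app M (var 0))
  | lam M => IsBetaEtaNormal M
  | var _ => True

/-- `I = λx.x`. -/
def I : Lam := lam (var 0)

/-- `T = λxλy.x`. -/
def T : Lam := lam (lam (var 1))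

/-- `F = λxλy.y`. -/
def F : Lam := lam (lam (var 0))

/-- The pair `<M,N> = λx.(x M N)` (the binder shifts the free variables of `M,N`). -/
def pair (M N : Lam) : Lam := lam (app (app (var 0) (lift 0 M)) (lift 0 N))

end Lam

/-- For a sequence `U` (where `U i` codes the mathematical `U_{i+1}`),
`tuple U n` is the term `<U₁,…,Uₙ> = <…<<I,U₁>,U₂>,…,Uₙ>` (and `tuple U 0 = I`). -/
def Lam.tuple (U : ℕ → Lam) : ℕ → Lam
  | 0 => Lam.I
  | n + 1 => Lam.pair (Lam.tuple U n) (U n)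

/-!
Diagonalisation: there are only countably many terms `A₀, A₁, …`, so it suffices to choose `Uₙ₊₁`
recursively, out of two closed normal terms that are not β-equivalent, such that it is not
β-equivalent to `Aₙ <U₁,…,Uₙ>`. The terms `T` and `F` will do: they have different values in a graph
model, where a term denotes a set of points and β-equivalent terms denote the same set.
-/

namespace Lam

section GraphModel

variable {D : Type*}

/-- The environment `ρ` with the value `X` inserted at index `n`, the values from index `n` on
moving up by one; the semantic counterpart of `lift n`. -/
def insertAt (ρ : ℕ → Set D) (n : ℕ) (X : Set D) : ℕ → Set D := fun i =>
  if i < n then ρ i else if i = n then X else ρ (i - 1)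

theorem insertAt_insertAt_zero (ρ : ℕ → Set D) (n : ℕ) (X Y : Set D) :
    insertAt (insertAt ρ n X) 0 Y = insertAt (insertAt ρ 0 Y) (n + 1) X := by
  funext i
  rcases i with _ | _ | i
  · simp [insertAt]
  · rcases n with _ | n <;> simp [insertAt]
  · simp [insertAt]

theorem insertAt_mono {ρ σ : ℕ → Set D} (hρσ : ρ ≤ σ) (n : ℕ) {X Y : Set D} (hXY : X ⊆ Y) :
    insertAt ρ n X ≤ insertAt σ n Y := by
  intro i
  simp only [insertAt]
  split_ifs
  exacts [hρσ i, hXY, hρσ (i - 1)]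

/-- Scott continuity of a monotone operator on sets, in elementwise form: every element of a value
is already produced by a finite part of the argument. -/
def Finitary (f : Set D → Set D) : Prop :=
  ∀ ⦃X : Set D⦄ ⦃b : D⦄, b ∈ f X → ∃ t : Finset D, ↑t ⊆ X ∧ b ∈ f t

theorem Finitary.exists_finset_subset {f : Set D → Set D} (hf : Finitary f) (hmono : Monotone f)
    {X : Set D} {s : Finset D} (hs : ↑s ⊆ f X) : ∃ t : Finset D, ↑t ⊆ X ∧ ↑s ⊆ f t := by
  classical
  have hdirected : DirectedOn (fun t u : Finset D => f t ⊆ f u) {t | ↑t ⊆ X} :=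
    fun t ht u hu => ⟨t ∪ u, by simpa using ⟨ht, hu⟩, hmono (by simp), hmono (by simp)⟩
  exact hdirected.exists_mem_subset_of_finset_subset_biUnion ⟨∅, by simp⟩
    fun b hb => by simpa using hf (hs hb)

variable (e : Finset D × D ↪ D)

/-- The interpretation of terms in the graph model `(D, e)`: a term denotes a set of points, and the
point `e (s, b)` of a function records that it outputs `b` on every argument including `s`. -/
def interp : Lam → (ℕ → Set D) → Set D
  | var n, ρ => ρ n
  | app M N, ρ => {b | ∃ s : Finset D, ↑s ⊆ interp N ρ ∧ e (s, b) ∈ interp M ρ}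
  | lam M, ρ => {c | ∃ (s : Finset D) (b : D), e (s, b) = c ∧ b ∈ interp M (insertAt ρ 0 s)}

theorem interp_lift (M : Lam) (d : ℕ) (ρ : ℕ → Set D) (X : Set D) :
    interp e (M.lift d) (insertAt ρ d X) = interp e M ρ := by
  induction M generalizing d ρ with
  | var n =>
    by_cases h : n < d
    · simp [lift, interp, insertAt, h]
    · have hlt : ¬ n + 1 < d := by omega
      have hne : n + 1 ≠ d := by omega
      simp [lift, interp, insertAt, h, hlt, hne]
  | app M N ihM ihN => simp only [lift, interp, ihM, ihN]
  | lam M ih => simp only [lift, interp, insertAt_insertAt_zero, ih]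

theorem interp_subst (M : Lam) (n : ℕ) (N : Lam) (ρ : ℕ → Set D) :
    interp e (M.subst n N) ρ = interp e M (insertAt ρ n (interp e N ρ)) := by
  induction M generalizing n N ρ with
  | var m =>
    rcases lt_trichotomy m n with h | rfl | h
    · simp [subst, interp, insertAt, h, h.ne, h.not_gt]
    · simp [subst, interp, insertAt]
    · simp [subst, interp, insertAt, h, h.ne', h.not_gt]
  | app M₁ M₂ ih₁ ih₂ => simp only [subst, interp, ih₁, ih₂]
  | lam M ih => simp only [subst, interp, insertAt_insertAt_zero, ih, interp_lift]

theorem interp_mono (M : Lam) : Monotone (interp e M) := by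
  intro ρ σ hρσ
  induction M generalizing ρ σ with
  | var n => exact hρσ n
  | app M N ihM ihN =>
    rintro b ⟨s, hs, hb⟩
    exact ⟨s, hs.trans (ihN hρσ), ihM hρσ hb⟩
  | lam M ih =>
    rintro _ ⟨s, b, rfl, hb⟩
    exact ⟨s, b, rfl, ih (insertAt_mono hρσ 0 subset_rfl) hb⟩

theorem interp_insertAt_mono (M : Lam) (ρ : ℕ → Set D) (n : ℕ) :
    Monotone fun X => interp e M (insertAt ρ n X) :=
  fun _ _ hXY => interp_mono e M (insertAt_mono le_rfl n hXY)

theorem interp_insertAt_finitary (M : Lam) (ρ : ℕ → Set D) (n : ℕ) :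
    Finitary fun X => interp e M (insertAt ρ n X) := by
  classical
  induction M generalizing ρ n with
  | var m =>
    intro X b hb
    by_cases h : m = n
    · exact ⟨{b}, by simpa [interp, insertAt, h] using hb, by simp [interp, insertAt, h]⟩
    · exact ⟨∅, by simp, by simpa [interp, insertAt, h] using hb⟩
  | app M N ihM ihN =>
    rintro X b ⟨s, hs, hb⟩
    obtain ⟨t, htX, ht⟩ := ihM ρ n hb
    obtain ⟨u, huX, hu⟩ := (ihN ρ n).exists_finset_subset (interp_insertAt_mono e N ρ n) hs
    refine ⟨t ∪ u, by simpa using ⟨htX, huX⟩, s, ?_, ?_⟩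
    · exact hu.trans (interp_insertAt_mono e N ρ n (by simp))
    · exact interp_insertAt_mono e M ρ n (by simp) ht
  | lam M ih =>
    rintro X _ ⟨s, b, rfl, hb⟩
    rw [insertAt_insertAt_zero] at hb
    obtain ⟨t, htX, ht⟩ := ih _ _ hb
    exact ⟨t, htX, s, b, rfl, by rwa [insertAt_insertAt_zero]⟩

theorem interp_app_lam (M N : Lam) (ρ : ℕ → Set D) :
    interp e (app (lam M) N) ρ = interp e M (insertAt ρ 0 (interp e N ρ)) := by
  ext b
  constructor
  · rintro ⟨s, hs, s', b', heq, hb⟩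
    obtain ⟨rfl, rfl⟩ : s' = s ∧ b' = b := by simpa using heq
    exact interp_insertAt_mono e M ρ 0 hs hb
  · intro hb
    obtain ⟨s, hs, hbs⟩ := interp_insertAt_finitary e M ρ 0 hb
    exact ⟨s, hs, s, b, rfl, hbs⟩

theorem Step.interp_eq {M N : Lam} (h : Step M N) : interp e M = interp e N := by
  induction h with
  | beta M N => funext ρ; rw [interp_app_lam, interp_subst]
  | appL _ _ ih | appR _ _ ih | lam _ ih => funext ρ; simp only [interp, ih]

theorem BetaEq.interp_eq {M N : Lam} (h : BetaEq M N) : interp e M = interp e N :=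
  congrArg (Quot.lift (interp e) fun _ _ hstep => hstep.interp_eq e) (Quot.eqvGen_sound h)

theorem interp_T_ne_interp_F [Nonempty D] : interp e T ≠ interp e F := by
  obtain ⟨a⟩ := ‹Nonempty D›
  intro h
  have hT : e ({a}, e (∅, a)) ∈ interp e T fun _ => ∅ :=
    ⟨{a}, e (∅, a), rfl, ∅, a, rfl, by simp [interp, insertAt]⟩
  have hF : e ({a}, e (∅, a)) ∉ interp e F fun _ => ∅ := by
    simp [F, interp, insertAt]
  exact hF (h ▸ hT)

end GraphModel

theorem not_betaEq_T_F : ¬ BetaEq T F := fun h =>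
  interp_T_ne_interp_F (Encodable.encode' (Finset ℕ × ℕ)) (h.interp_eq _)

theorem closed_T : Closed T := by simp [Closed, T, HasFree]

theorem closed_F : Closed F := by simp [Closed, F, HasFree]

theorem isBetaNormal_T : IsBetaNormal T := trivial

theorem isBetaNormal_F : IsBetaNormal F := trivial

/-- A Gödel numbering of terms, which serves to show that there are only countably many. -/
def godelNumber : Lam → ℕ
  | var n => Nat.pair 0 n
  | app M N => Nat.pair 1 (Nat.pair (godelNumber M) (godelNumber N))
  | lam M => Nat.pair 2 (godelNumber M)

theorem godelNumber_injective : Function.Injective godelNumber := by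
  intro M N h
  induction M generalizing N <;> cases N <;> grind [godelNumber, Nat.pair_eq_pair]

instance : Countable Lam := godelNumber_injective.countable

/-- `A` generates the sequence `U` (with `U n` standing for `Uₙ₊₁`): it maps each initial tuple
`<U₁,…,Uₙ>`, which is `I` for `n = 0`, to the next term. The term `A` may be open. -/
def Generates (A : Lam) (U : ℕ → Lam) : Prop :=
  ∀ n, BetaEq (app A (tuple U n)) (U n)

theorem exists_seq_eq_apply_tuple (f : ℕ → Lam → Lam) :
    ∃ U : ℕ → Lam, ∀ n, U n = f n (tuple U n) := by
  let V : ℕ → Lam := fun n => Nat.rec I (fun n W => pair W (f n W)) n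
  have htuple : ∀ n, tuple (fun n => f n (V n)) n = V n := by
    intro n
    induction n with
    | zero => rfl
    | succ n ih => simp only [tuple, ih, V]
  exact ⟨fun n => f n (V n), fun n => by rw [htuple]⟩

theorem exists_eq_or_eq_and_not_betaEq {P Q : Lam} (hPQ : ¬ BetaEq P Q) (M : Lam) :
    ∃ R, (R = P ∨ R = Q) ∧ ¬ BetaEq M R := by
  by_cases hMP : BetaEq M P
  · exact ⟨Q, .inr rfl, fun hMQ => hPQ (.trans _ _ _ (.symm _ _ hMP) hMQ)⟩
  · exact ⟨P, .inl rfl, hMP⟩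

theorem exists_seq_forall_not_generates {P Q : Lam} (hPQ : ¬ BetaEq P Q) :
    ∃ U : ℕ → Lam, (∀ i, U i = P ∨ U i = Q) ∧ ∀ A, ¬ Generates A U := by
  choose avoid havoid_mem havoid using exists_eq_or_eq_and_not_betaEq hPQ
  have : Nonempty Lam := ⟨I⟩
  obtain ⟨enum, henum⟩ := exists_surjective_nat Lam
  obtain ⟨U, hU⟩ := exists_seq_eq_apply_tuple fun n V => avoid (app (enum n) V)
  refine ⟨U, fun i => hU i ▸ havoid_mem _, fun A hA => ?_⟩
  obtain ⟨n, rfl⟩ := henum A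
  exact havoid _ (hU n ▸ hA n)

end Lam

open Lam in
theorem statement8_general :
    ∃ U : ℕ → Lam, (∀ i, Closed (U i) ∧ IsBetaNormal (U i)) ∧ ∀ A, ¬ Generates A U := by
  obtain ⟨U, hU, hgen⟩ := exists_seq_forall_not_generates not_betaEq_T_F
  refine ⟨U, fun i => ?_, hgen⟩
  rcases hU i with h | h
  · exact h ▸ ⟨closed_T, isBetaNormal_T⟩
  · exact h ▸ ⟨closed_F, isBetaNormal_F⟩

/-- There is an infinite sequence `U₁, U₂, …` of closed β-normal λ-terms without
generator : no closed λ-term `A` satisfies `(A I) ≃β U₁` and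
`(A <U₁,…,Uₙ>) ≃β U_{n+1}` for all `n ≥ 1`.
(Here `U i` codes the mathematical `U_{i+1}`, so `Lam.tuple U n = <U₁,…,Uₙ>`.) -/
theorem statement8 :
    ∃ U : ℕ → Lam,
      (∀ i, Lam.Closed (U i) ∧ Lam.IsBetaNormal (U i)) ∧
      ¬ ∃ A, Lam.Closed A ∧ Lam.BetaEq (Lam.app A Lam.I) (U 0) ∧
          ∀ n, 1 ≤ n → Lam.BetaEq (Lam.app A (Lam.tuple U n)) (U n) := by
  obtain ⟨U, hU, hgen⟩ := statement8_general
  exact ⟨U, hU, fun ⟨A, _, hzero, hpos⟩ =>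
    hgen A fun n => n.eq_zero_or_pos.elim (fun hn => hn ▸ hzero) (hpos n)⟩
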